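/- arXiv:1605.03310 — 2 statements merged into one kernel-verified Lean document; each statement's English description precedes it below -/
import Mathlib

section
/- Assume the bounded-variance condition, the concave-penalty condition, and the sparse-eigenvalue condition with constants c > 0 and κ. Let β₀ ∈ B_{τ,κ} with s = ‖β₀‖₀, let β̂ be a global minimizer of Q_n over B_{τ,κ}, and assume ‖n⁻¹Xᵀε‖_∞ ≤ λ/2. Set C₀ = (1 + 2c₃)/(c·c₂) and ρ = C₀²λ²/τ², and assume ρ < 1. Then for every q ∈ [1,2] the estimation error satisfies ‖β̂ − β₀‖_q ≤ C₀·λ·s^{1/q}·(1 − ρ)^{−1/q}, where ‖v‖_q = (Σ_j |v_j|^q)^{1/q}, and moreover ‖β̂ − β₀‖_∞ ≤ C₀·λ·s^{1/2}·(1 − ρ)^{−1/2}. -/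
open scoped BigOperators Classical

/-- The number of nonzero coordinates of a vector (the `L₀` "norm"). -/
noncomputable def l0 {p : ℕ} (v : Fin p → ℝ) : ℕ :=
  (Finset.univ.filter fun j => v j ≠ 0).card

/-- The thresholded parameter space `B_{τ,κ}`: vectors with fewer than `κ/2` nonzero
coordinates, each nonzero coordinate having magnitude at least `τ`. -/
def Bset {p : ℕ} (τ : ℝ) (κ : ℕ) : Set (Fin p → ℝ) :=
  {β | 2 * l0 β < κ ∧ ∀ j, β j = 0 ∨ τ ≤ |β j|}

/-- The penalized negative log-likelihood
`Q_n(β) = −n⁻¹(yᵀXβ − Σᵢ b((Xβ)ᵢ)) + Σⱼ p_λ(|β_j|)`. -/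
noncomputable def Qn {n p : ℕ} (X : Matrix (Fin n) (Fin p) ℝ) (y : Fin n → ℝ)
    (b : ℝ → ℝ) (pen : ℝ → ℝ) (β : Fin p → ℝ) : ℝ :=
  -(1 / (n : ℝ)) * (∑ i, y i * X.mulVec β i - ∑ i, b (X.mulVec β i)) + ∑ j, pen |β j|

/-!
Write `δ = β̂ - β₀`. A concave increasing penalty is Lipschitz with constant its slope at `0`, so
minimality of `β̂` bounds the likelihood excess of `β̂` over `β₀` above by a multiple of `‖δ‖₁`.
Strong convexity of `b` bounds it below by a quadratic in `Xδ` minus a noise term of order `‖δ‖₁`.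
Since `δ` is sparse, the sparse-eigenvalue condition turns this into `‖δ‖₂² ≤ A‖δ‖₁` with
`A = C₀λ`, and Cauchy–Schwarz on the support of `δ` gives `‖δ‖₂² ≤ A²‖δ‖₀`.

Thresholding closes the loop: every false positive of `β̂` contributes at least `τ²` to `‖δ‖₂²`, so
`τ²‖δ‖₀ ≤ τ²s + ‖δ‖₂² ≤ τ²s + A²‖δ‖₀`. Hence `‖δ‖₀ ≤ s / (1 - ρ)` with `ρ = A²/τ²`, and the power
mean inequality on the support of `δ` yields all the `ℓ_q` bounds.
-/

section StrongConvexity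

open Set Filter Topology

theorem strongConvexOn_univ_of_le_deriv_deriv {f : ℝ → ℝ} {m : ℝ} (hf : Differentiable ℝ f)
    (hf' : Differentiable ℝ (deriv f)) (hm : ∀ x, m ≤ deriv (deriv f) x) :
    StrongConvexOn univ m f := by
  have hderiv : ∀ x, HasDerivAt (fun x ↦ f x - m / 2 * ‖x‖ ^ 2) (deriv f x - m * x) x := by
    intro x
    simp only [Real.norm_eq_abs, sq_abs]
    have hsq := (hasDerivAt_pow 2 x).const_mul (m / 2)
    exact ((hf x).hasDerivAt.sub hsq).congr_deriv (by norm_num; ring)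
  have hderiv₂ : ∀ x, HasDerivAt (fun x ↦ deriv f x - m * x) (deriv (deriv f) x - m) x := fun x ↦
    ((hf' x).hasDerivAt.sub ((hasDerivAt_id' x).const_mul m)).congr_deriv (by rw [mul_one])
  have hderiv_eq := funext fun x ↦ (hderiv x).deriv
  rw [strongConvexOn_iff_convex]
  refine convexOn_univ_of_deriv2_nonneg (fun x ↦ (hderiv x).differentiableAt) ?_ fun x ↦ ?_
  · rw [hderiv_eq]
    exact fun x ↦ (hderiv₂ x).differentiableAt
  · rw [Function.iterate_succ_apply, Function.iterate_one, hderiv_eq, (hderiv₂ x).deriv]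
    exact sub_nonneg.2 (hm x)

theorem lineDeriv_add_norm_sq_le_sub_of_strongConvexOn {E : Type*} [NormedAddCommGroup E]
    [NormedSpace ℝ E] {s : Set E} {f : E → ℝ} {m f' : ℝ} {x y : E} (hf : StrongConvexOn s m f)
    (hx : x ∈ s) (hy : y ∈ s) (hf' : HasLineDerivAt ℝ f f' x (y - x)) :
    f' + m / 2 * ‖y - x‖ ^ 2 ≤ f y - f x := by
  have hchord : ∀ t ∈ Ioo (0 : ℝ) 1,
      t⁻¹ • (f (x + t • (y - x)) - f x) + (1 - t) * (m / 2 * ‖y - x‖ ^ 2) ≤ f y - f x := by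
    rintro t ⟨ht₀, ht₁⟩
    have hconv := hf.2 hy hx ht₀.le (sub_nonneg.2 ht₁.le) (add_sub_cancel t 1)
    rw [show t • y + (1 - t) • x = x + t • (y - x) by module] at hconv
    simp only [smul_eq_mul] at hconv ⊢
    rw [← le_sub_iff_add_le, inv_mul_le_iff₀ ht₀]
    linarith
  have hlim : Tendsto
      (fun t : ℝ ↦ t⁻¹ • (f (x + t • (y - x)) - f x) + (1 - t) * (m / 2 * ‖y - x‖ ^ 2))
      (𝓝[>] 0) (𝓝 (f' + (1 - 0) * (m / 2 * ‖y - x‖ ^ 2))) :=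
    hf'.tendsto_slope_zero_right.add
      (((tendsto_const_nhds.sub tendsto_id).mul_const _).mono_left nhdsWithin_le_nhds)
  rw [sub_zero, one_mul] at hlim
  exact le_of_tendsto hlim (mem_of_superset (Ioo_mem_nhdsGT one_pos) hchord)

end StrongConvexity

section Penalty

open Set

theorem lipschitzOnWith_Ici_of_concaveOn_of_monotoneOn {f : ℝ → ℝ} {f' a : ℝ}
    (hconc : ConcaveOn ℝ (Ici a) f) (hmono : MonotoneOn f (Ici a))
    (hf' : HasDerivWithinAt f f' (Ici a) a) : LipschitzOnWith f'.toNNReal f (Ici a) := by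
  have hslope : ∀ x ∈ Ici a, ∀ y ∈ Ici a, x < y → slope f x y ≤ f' := by
    intro x hx y hy hxy
    obtain rfl | hax := eq_or_lt_of_le (mem_Ici.1 hx)
    · exact hconc.slope_le_of_hasDerivWithinAt hx hy hxy hf'
    · calc slope f x y ≤ slope f a x := by
            simpa only [slope_def_field] using hconc.slope_anti_adjacent self_mem_Ici hy hax hxy
        _ ≤ f' := hconc.slope_le_of_hasDerivWithinAt self_mem_Ici hx hax hf'
  refine LipschitzOnWith.of_dist_le' fun x hx y hy ↦ ?_
  wlog hxy : x < y generalizing x y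
  · obtain rfl | hyx := (not_lt.1 hxy).eq_or_lt
    · simp only [dist_self, mul_zero, le_refl]
    · simpa only [dist_comm] using this y hy x hx hyx
  have hpos : 0 < y - x := sub_pos.2 hxy
  calc dist (f x) (f y) = f y - f x := by
        rw [dist_comm, Real.dist_eq, abs_of_nonneg (sub_nonneg.2 (hmono hx hy hxy.le))]
    _ = slope f x y * (y - x) := by rw [slope_def_field, div_mul_cancel₀ _ hpos.ne']
    _ ≤ f' * (y - x) := mul_le_mul_of_nonneg_right (hslope x hx y hy hxy) hpos.le
    _ = f' * dist x y := by rw [dist_comm, Real.dist_eq, abs_of_pos hpos]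

theorem sum_comp_abs_sub_sum_comp_abs_le {ι : Type*} [Fintype ι] {f : ℝ → ℝ} {K : NNReal}
    (hf : LipschitzOnWith K f (Ici 0)) (u v : ι → ℝ) :
    ∑ j, f |u j| - ∑ j, f |v j| ≤ K * ∑ j, |v j - u j| := by
  rw [← Finset.sum_sub_distrib, Finset.mul_sum]
  refine Finset.sum_le_sum fun j _ ↦ ?_
  calc f |u j| - f |v j| ≤ |f (|u j|) - f (|v j|)| := le_abs_self _
    _ ≤ K * |(|u j| - |v j|)| := hf.dist_le_mul _ (abs_nonneg (u j)) _ (abs_nonneg (v j))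
    _ ≤ K * |v j - u j| := by
      rw [abs_sub_comm (v j)]
      exact mul_le_mul_of_nonneg_left (abs_abs_sub_abs_le _ _) K.coe_nonneg

end Penalty

section SparseVectors

variable {p : ℕ}

theorem l0_sub_le (u v : Fin p → ℝ) : l0 (u - v) ≤ l0 u + l0 v := by
  refine (Finset.card_le_card fun j ↦ ?_).trans (Finset.card_union_le _ _)
  simp only [Finset.mem_filter, Finset.mem_univ, Finset.mem_union, Pi.sub_apply, true_and]
  contrapose!
  rintro ⟨hu, hv⟩
  rw [hu, hv, sub_zero]

theorem sum_comp_eq_sum_support {ι M N : Type*} [Fintype ι] [Zero M] [AddCommMonoid N]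
    {f : M → N} (hf : f 0 = 0) (v : ι → M) :
    ∑ j, f (v j) = ∑ j with v j ≠ 0, f (v j) := by
  rw [Finset.sum_filter_of_ne]
  intro j _ hfj hvj
  exact hfj (by rw [hvj, hf])

theorem sq_sum_abs_le_l0_mul_sum_sq (v : Fin p → ℝ) :
    (∑ j, |v j|) ^ 2 ≤ l0 v * ∑ j, v j ^ 2 := by
  rw [sum_comp_eq_sum_support abs_zero,
    sum_comp_eq_sum_support (f := fun t ↦ t ^ 2) (zero_pow two_ne_zero)]
  simpa only [sq_abs, l0] using
    sq_sum_le_card_mul_sum_sq (s := Finset.univ.filter fun j ↦ v j ≠ 0) (f := fun j ↦ |v j|)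

theorem lq_le_l0_rpow_mul_lr {q r : ℝ} (hq : 0 < q) (hqr : q ≤ r) (v : Fin p → ℝ) :
    (∑ j, |v j| ^ q) ^ (1 / q) ≤
      (l0 v : ℝ) ^ (1 / q - 1 / r) * (∑ j, |v j| ^ r) ^ (1 / r) := by
  have hr : 0 < r := hq.trans_le hqr
  have hpow : (∑ j, |v j| ^ q) ^ (r / q) ≤ (l0 v : ℝ) ^ (r / q - 1) * ∑ j, |v j| ^ r := by
    rw [sum_comp_eq_sum_support (f := fun t ↦ |t| ^ q) (by simp [hq.ne']),
      sum_comp_eq_sum_support (f := fun t ↦ |t| ^ r) (by simp [hr.ne'])]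
    have hmean := Real.rpow_sum_le_const_mul_sum_rpow_of_nonneg
      (Finset.univ.filter fun j ↦ v j ≠ 0) (f := fun j ↦ |v j| ^ q) ((one_le_div hq).2 hqr)
      fun _ _ ↦ by positivity
    simpa only [← Real.rpow_mul (abs_nonneg _), mul_div_cancel₀ r hq.ne', l0] using hmean
  calc (∑ j, |v j| ^ q) ^ (1 / q) = ((∑ j, |v j| ^ q) ^ (r / q)) ^ (1 / r) := by
        rw [← Real.rpow_mul (by positivity)]
        congr 1
        field_simp
    _ ≤ ((l0 v : ℝ) ^ (r / q - 1) * ∑ j, |v j| ^ r) ^ (1 / r) := by gcongr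
    _ = (l0 v : ℝ) ^ (1 / q - 1 / r) * (∑ j, |v j| ^ r) ^ (1 / r) := by
        rw [Real.mul_rpow (by positivity) (by positivity), ← Real.rpow_mul (by positivity)]
        congr 2
        field_simp

theorem abs_le_lq {ι : Type*} [Fintype ι] {q : ℝ} (hq : 0 < q) (v : ι → ℝ) (j : ι) :
    |v j| ≤ (∑ i, |v i| ^ q) ^ (1 / q) := by
  rw [one_div, Real.le_rpow_inv_iff_of_pos (abs_nonneg _) (by positivity) hq]
  exact Finset.single_le_sum (f := fun i ↦ |v i| ^ q) (fun _ _ ↦ by positivity)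
    (Finset.mem_univ j)

theorem sum_sq_le_sq_mul_l0 {A : ℝ} {v : Fin p → ℝ} (h : ∑ j, v j ^ 2 ≤ A * ∑ j, |v j|) :
    ∑ j, v j ^ 2 ≤ A ^ 2 * l0 v := by
  have hnonneg : 0 ≤ ∑ j, v j ^ 2 := by positivity
  obtain hzero | hpos := hnonneg.eq_or_lt
  · rw [← hzero]
    positivity
  · refine le_of_mul_le_mul_right ?_ hpos
    calc (∑ j, v j ^ 2) * ∑ j, v j ^ 2 ≤ (A * ∑ j, |v j|) ^ 2 := by
          rw [← sq]
          gcongr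
      _ = A ^ 2 * (∑ j, |v j|) ^ 2 := mul_pow _ _ _
      _ ≤ A ^ 2 * (l0 v * ∑ j, v j ^ 2) := by
          gcongr
          exact sq_sum_abs_le_l0_mul_sum_sq v
      _ = A ^ 2 * l0 v * ∑ j, v j ^ 2 := (mul_assoc _ _ _).symm

theorem lq_le_mul_l0_rpow {A q : ℝ} (hA : 0 ≤ A) (hq : 0 < q) (hq₂ : q ≤ 2) {v : Fin p → ℝ}
    (h : ∑ j, v j ^ 2 ≤ A ^ 2 * l0 v) :
    (∑ j, |v j| ^ q) ^ (1 / q) ≤ A * (l0 v : ℝ) ^ (1 / q) := by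
  have hl2 : (∑ j, |v j| ^ (2 : ℝ)) ^ (1 / 2 : ℝ) ≤ A * (l0 v : ℝ) ^ (1 / 2 : ℝ) := by
    simp only [Real.rpow_two, sq_abs, ← Real.sqrt_eq_rpow]
    calc √(∑ j, v j ^ 2) ≤ √(A ^ 2 * l0 v) := Real.sqrt_le_sqrt h
      _ = A * √(l0 v) := by rw [Real.sqrt_mul (sq_nonneg A), Real.sqrt_sq hA]
  have hexp : 0 ≤ 1 / q - 1 / 2 := sub_nonneg.2 (one_div_le_one_div_of_le hq hq₂)
  calc (∑ j, |v j| ^ q) ^ (1 / q)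
      ≤ (l0 v : ℝ) ^ (1 / q - 1 / 2) * (∑ j, |v j| ^ (2 : ℝ)) ^ (1 / 2 : ℝ) :=
        lq_le_l0_rpow_mul_lr hq hq₂ v
    _ ≤ (l0 v : ℝ) ^ (1 / q - 1 / 2) * (A * (l0 v : ℝ) ^ (1 / 2 : ℝ)) := by gcongr
    _ = A * ((l0 v : ℝ) ^ (1 / q - 1 / 2) * (l0 v : ℝ) ^ (1 / 2 : ℝ)) := mul_left_comm _ _ _
    _ = A * (l0 v : ℝ) ^ (1 / q) := by
        rw [← Real.rpow_add_of_nonneg (by positivity) hexp (by norm_num), sub_add_cancel]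

theorem sq_mul_l0_sub_le {τ : ℝ} (hτ : 0 < τ) {u : Fin p → ℝ} (hu : ∀ j, u j = 0 ∨ τ ≤ |u j|)
    (v : Fin p → ℝ) : τ ^ 2 * l0 (u - v) ≤ τ ^ 2 * l0 v + ∑ j, (u j - v j) ^ 2 := by
  have hl0 : ∀ w : Fin p → ℝ, (l0 w : ℝ) = ∑ j, if w j ≠ 0 then 1 else 0 := fun w ↦ by
    rw [l0, Finset.natCast_card_filter]
  rw [hl0, hl0, Finset.mul_sum, Finset.mul_sum, ← Finset.sum_add_distrib]
  refine Finset.sum_le_sum fun j _ ↦ ?_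
  by_cases hvj : v j = 0
  · rcases hu j with huj | huj
    · simp [huj, hvj]
    · have huj_ne : u j ≠ 0 := abs_pos.1 (hτ.trans_le huj)
      simpa [hvj, huj_ne, sq_abs] using pow_le_pow_left₀ hτ.le huj 2
  · rw [if_pos hvj]
    split_ifs <;> linarith [sq_nonneg (u j - v j), sq_nonneg τ]

theorem l0_sub_le_div {A τ : ℝ} (hτ : 0 < τ) (hA : A ^ 2 / τ ^ 2 < 1) {u v : Fin p → ℝ}
    (hu : ∀ j, u j = 0 ∨ τ ≤ |u j|) (h : ∑ j, (u j - v j) ^ 2 ≤ A ^ 2 * l0 (u - v)) :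
    (l0 (u - v) : ℝ) ≤ l0 v / (1 - A ^ 2 / τ ^ 2) := by
  rw [le_div_iff₀ (sub_pos.2 hA)]
  refine le_of_mul_le_mul_left ?_ (pow_pos hτ 2)
  calc τ ^ 2 * (l0 (u - v) * (1 - A ^ 2 / τ ^ 2))
      = τ ^ 2 * l0 (u - v) - A ^ 2 * l0 (u - v) := by field_simp
    _ ≤ τ ^ 2 * l0 v := by linarith [sq_mul_l0_sub_le hτ hu v]

theorem lq_sub_le_of_sum_sq_sub_le {A τ q : ℝ} (hA : 0 ≤ A) (hτ : 0 < τ)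
    (hAτ : A ^ 2 / τ ^ 2 < 1) (hq : 0 < q) (hq₂ : q ≤ 2) {u v : Fin p → ℝ}
    (hu : ∀ j, u j = 0 ∨ τ ≤ |u j|)
    (h : ∑ j, (u j - v j) ^ 2 ≤ A * ∑ j, |u j - v j|) :
    (∑ j, |u j - v j| ^ q) ^ (1 / q) ≤
      A * (l0 v : ℝ) ^ (1 / q) * (1 - A ^ 2 / τ ^ 2) ^ (-(1 / q)) := by
  have hpos : 0 < 1 - A ^ 2 / τ ^ 2 := sub_pos.2 hAτ
  have hl2 : ∑ j, (u - v) j ^ 2 ≤ A ^ 2 * l0 (u - v) := sum_sq_le_sq_mul_l0 h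
  calc (∑ j, |u j - v j| ^ q) ^ (1 / q) ≤ A * (l0 (u - v) : ℝ) ^ (1 / q) :=
        lq_le_mul_l0_rpow hA hq hq₂ hl2
    _ ≤ A * (l0 v / (1 - A ^ 2 / τ ^ 2)) ^ (1 / q) := by
        gcongr
        exact l0_sub_le_div hτ hAτ hu hl2
    _ = A * (l0 v : ℝ) ^ (1 / q) * (1 - A ^ 2 / τ ^ 2) ^ (-(1 / q)) := by
        rw [Real.div_rpow (by positivity) hpos.le, Real.rpow_neg hpos.le, mul_assoc,
          div_eq_mul_inv]

end SparseVectors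

section Likelihood

theorem sum_mul_mulVec_le_mul_sum_abs {ι ι' : Type*} [Fintype ι] [Fintype ι'] {X : Matrix ι ι' ℝ}
    {ε : ι → ℝ} {γ : ℝ} (h : ∀ j, |∑ i, X i j * ε i| ≤ γ) (v : ι' → ℝ) :
    ∑ i, ε i * X.mulVec v i ≤ γ * ∑ j, |v j| := by
  have hadjoint : ∑ i, ε i * X.mulVec v i = ∑ j, (∑ i, X i j * ε i) * v j := by
    simpa only [dotProduct, Matrix.vecMul, mul_comm] using Matrix.dotProduct_mulVec ε X v
  rw [hadjoint, Finset.mul_sum]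
  refine Finset.sum_le_sum fun j _ ↦ (le_abs_self _).trans ?_
  rw [abs_mul]
  exact mul_le_mul_of_nonneg_right (h j) (abs_nonneg _)

/-- The unnormalized negative log-likelihood `Σᵢ b((Xβ)ᵢ) − yᵀXβ`, which is `n` times the
smooth part of `Qn`. -/
noncomputable def negLogLik {n p : ℕ} (X : Matrix (Fin n) (Fin p) ℝ) (y : Fin n → ℝ)
    (b : ℝ → ℝ) (β : Fin p → ℝ) : ℝ :=
  ∑ i, b (X.mulVec β i) - ∑ i, y i * X.mulVec β i

variable {n p : ℕ} {X : Matrix (Fin n) (Fin p) ℝ} {y ε : Fin n → ℝ} {b pen : ℝ → ℝ}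
  {β β₀ : Fin p → ℝ} {m : ℝ}

theorem le_negLogLik_sub_negLogLik (hb : Differentiable ℝ b)
    (hconv : StrongConvexOn Set.univ m b)
    (hy : ∀ i, y i = deriv b (X.mulVec β₀ i) + ε i) (β : Fin p → ℝ) :
    m / 2 * ∑ i, X.mulVec (β - β₀) i ^ 2 - ∑ i, ε i * X.mulVec (β - β₀) i ≤
      negLogLik X y b β - negLogLik X y b β₀ := by
  simp only [negLogLik, Finset.mul_sum, ← Finset.sum_sub_distrib]
  refine Finset.sum_le_sum fun i _ ↦ ?_
  have htangent := lineDeriv_add_norm_sq_le_sub_of_strongConvexOn hconv (Set.mem_univ _)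
    (Set.mem_univ (X.mulVec β i)) ((hb (X.mulVec β₀ i)).hasDerivAt.hasFDerivAt.hasLineDerivAt _)
  simp only [ContinuousLinearMap.toSpanSingleton_apply, smul_eq_mul, Real.norm_eq_abs, sq_abs]
    at htangent
  rw [Matrix.mulVec_sub, Pi.sub_apply, hy i]
  linarith

theorem negLogLik_sub_le_of_Qn_le (hn : 0 < n) (h : Qn X y b pen β ≤ Qn X y b pen β₀) :
    negLogLik X y b β - negLogLik X y b β₀ ≤ n * (∑ j, pen |β₀ j| - ∑ j, pen |β j|) := by
  have hQn : ∀ β, Qn X y b pen β = negLogLik X y b β / n + ∑ j, pen |β j| := fun β ↦ by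
    rw [Qn, negLogLik]
    ring
  rw [hQn, hQn] at h
  rw [← div_le_iff₀' (by positivity), sub_div]
  linarith

theorem sum_sq_sub_le_of_Qn_le (hn : 0 < n) (hb : Differentiable ℝ b) (hm : 0 < m)
    (hconv : StrongConvexOn Set.univ m b) (hy : ∀ i, y i = deriv b (X.mulVec β₀ i) + ε i)
    {K : NNReal} (hpen : LipschitzOnWith K pen (Set.Ici 0)) {c γ : ℝ} (hc : 0 < c)
    (hse : c * ∑ j, (β j - β₀ j) ^ 2 ≤ 1 / n * ∑ i, X.mulVec (β - β₀) i ^ 2)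
    (hE : ∀ j, |1 / n * ∑ i, X i j * ε i| ≤ γ)
    (h : Qn X y b pen β ≤ Qn X y b pen β₀) :
    ∑ j, (β j - β₀ j) ^ 2 ≤ 2 * (γ + K) / (c * m) * ∑ j, |β j - β₀ j| := by
  have hn' : (0 : ℝ) < n := Nat.cast_pos.2 hn
  have hscore : ∀ j, |∑ i, X i j * ε i| ≤ n * γ := fun j ↦ by
    simpa [abs_mul, inv_mul_le_iff₀ hn'] using hE j
  have hbasic : m / 2 * (n * (c * ∑ j, (β j - β₀ j) ^ 2)) ≤ n * ((γ + K) * ∑ j, |β j - β₀ j|) :=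
    calc m / 2 * (n * (c * ∑ j, (β j - β₀ j) ^ 2))
        ≤ m / 2 * ∑ i, X.mulVec (β - β₀) i ^ 2 := by
          gcongr
          rwa [one_div, le_inv_mul_iff₀ hn'] at hse
      _ ≤ ∑ i, ε i * X.mulVec (β - β₀) i + (negLogLik X y b β - negLogLik X y b β₀) := by
          linarith [le_negLogLik_sub_negLogLik hb hconv hy β]
      _ ≤ n * γ * ∑ j, |β j - β₀ j| + n * (K * ∑ j, |β j - β₀ j|) := by
          refine add_le_add (sum_mul_mulVec_le_mul_sum_abs hscore _)
            ((negLogLik_sub_le_of_Qn_le hn h).trans ?_)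
          gcongr
          exact sum_comp_abs_sub_sum_comp_abs_le hpen β₀ β
      _ = n * ((γ + K) * ∑ j, |β j - β₀ j|) := by ring
  rw [mul_left_comm] at hbasic
  have hscaled := le_of_mul_le_mul_left hbasic hn'
  rw [div_mul_eq_mul_div, le_div_iff₀ (mul_pos hc hm)]
  linarith

end Likelihood

theorem estimation_losses_bound_general {n p : ℕ} (hn : 0 < n) (X : Matrix (Fin n) (Fin p) ℝ)
    (b : ℝ → ℝ) (hb : Differentiable ℝ b) (m : ℝ) (hm : 0 < m)
    (hconv : StrongConvexOn Set.univ m b)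
    (β₀ : Fin p → ℝ) (ε : Fin n → ℝ) (y : Fin n → ℝ)
    (hy : ∀ i, y i = deriv b (X.mulVec β₀ i) + ε i)
    (pen : ℝ → ℝ) (K : NNReal) (hpen : LipschitzOnWith K pen (Set.Ici 0))
    (c : ℝ) (hc : 0 < c) (κ : ℕ)
    (hse : ∀ v : Fin p → ℝ, l0 v < κ →
      c * ∑ j, v j ^ 2 ≤ 1 / n * ∑ i, X.mulVec v i ^ 2)
    (τ : ℝ) (hτ : 0 < τ) (hβ₀ : 2 * l0 β₀ < κ) (βh : Fin p → ℝ) (hβh : βh ∈ Bset τ κ)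
    (hmin : Qn X y b pen βh ≤ Qn X y b pen β₀)
    (γ : ℝ) (hγ : 0 ≤ γ) (hE : ∀ j, |1 / n * ∑ i, X i j * ε i| ≤ γ)
    (A ρ : ℝ) (hA : A = 2 * (γ + K) / (c * m)) (hρ : ρ = A ^ 2 / τ ^ 2) (hρ1 : ρ < 1) :
    (∀ q ∈ Set.Ioc (0 : ℝ) 2,
      (∑ j, |βh j - β₀ j| ^ q) ^ (1 / q) ≤
        A * (l0 β₀ : ℝ) ^ (1 / q) * (1 - ρ) ^ (-(1 / q))) ∧
    (∀ j, |βh j - β₀ j| ≤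
        A * (l0 β₀ : ℝ) ^ ((1 : ℝ) / 2) * (1 - ρ) ^ (-(1 : ℝ) / 2)) := by
  have hsparse : l0 (βh - β₀) < κ := by
    have hsub := l0_sub_le βh β₀
    have hsize := hβh.1
    lia
  have hbasic : ∑ j, (βh j - β₀ j) ^ 2 ≤ A * ∑ j, |βh j - β₀ j| :=
    hA ▸ sum_sq_sub_le_of_Qn_le hn hb hm hconv hy hpen hc (hse _ hsparse) hE hmin
  have hA₀ : 0 ≤ A := by rw [hA]; positivity
  subst hρ
  have hlq : ∀ q ∈ Set.Ioc (0 : ℝ) 2, (∑ j, |βh j - β₀ j| ^ q) ^ (1 / q) ≤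
      A * (l0 β₀ : ℝ) ^ (1 / q) * (1 - A ^ 2 / τ ^ 2) ^ (-(1 / q)) := fun q hq ↦
    lq_sub_le_of_sum_sq_sub_le hA₀ hτ hρ1 hq.1 hq.2 hβh.2 hbasic
  refine ⟨hlq, fun j ↦ ?_⟩
  rw [neg_div]
  exact (abs_le_lq two_pos (βh - β₀) j).trans (hlq 2 ⟨two_pos, le_rfl⟩)

/-- Deterministic form of Theorem 1(b): with `C₀ = (1 + 2c₃)/(c·c₂)` and
`ρ = C₀²λ²/τ² < 1`, on the event `‖n⁻¹Xᵀε‖_∞ ≤ λ/2` the global minimizer satisfies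
`‖β̂ − β₀‖_q ≤ C₀ λ s^{1/q} (1−ρ)^{−1/q}` for every `q ∈ [1,2]` and
`‖β̂ − β₀‖_∞ ≤ C₀ λ s^{1/2} (1−ρ)^{−1/2}`. -/
theorem estimation_losses_bound {n p : ℕ} (hn : 0 < n) (hp : 0 < p)
    (X : Matrix (Fin n) (Fin p) ℝ) (b : ℝ → ℝ) (hb : ContDiff ℝ 2 b)
    (β₀ : Fin p → ℝ) (ε : Fin n → ℝ) (y : Fin n → ℝ)
    (hy : ∀ i, y i = deriv b (X.mulVec β₀ i) + ε i)
    -- bounded-variance condition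
    (c₂ : ℝ) (hc₂ : 0 < c₂) (hc₂1 : c₂ ≤ 1)
    (hvar : ∀ θ : ℝ, c₂ ≤ deriv (deriv b) θ ∧ deriv (deriv b) θ ≤ c₂⁻¹)
    -- concave-penalty condition
    (pen : ℝ → ℝ) (lam c₃ : ℝ) (hc₃ : 0 < c₃) (hlam : 0 ≤ lam)
    (hmono : MonotoneOn pen (Set.Ici 0))
    (hconc : ConcaveOn ℝ (Set.Ici 0) pen)
    (hpen0 : pen 0 = 0)
    (hpendiff : DifferentiableOn ℝ pen (Set.Ioi 0))
    (hpend0 : HasDerivWithinAt pen (c₃ * lam) (Set.Ici 0) 0)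
    -- sparse-eigenvalue (robust spark) condition
    (c : ℝ) (hc : 0 < c) (κ : ℕ)
    (hse : ∀ v : Fin p → ℝ, l0 v < κ →
      c * ∑ j, (v j) ^ 2 ≤ (1 / (n : ℝ)) * ∑ i, (X.mulVec v i) ^ 2)
    -- thresholded parameter space and global minimizer
    (τ : ℝ) (hτ : 0 < τ) (hβ₀ : β₀ ∈ Bset τ κ)
    (βh : Fin p → ℝ) (hβh : βh ∈ Bset τ κ)
    (hmin : ∀ β ∈ Bset τ κ, Qn X y b pen βh ≤ Qn X y b pen β)
    -- the event `‖n⁻¹Xᵀε‖_∞ ≤ λ/2`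
    (hE : ∀ j, |(1 / (n : ℝ)) * ∑ i, X i j * ε i| ≤ lam / 2)
    -- the explicit constants
    (C₀ ρ : ℝ) (hC₀ : C₀ = (1 + 2 * c₃) / (c * c₂))
    (hρ : ρ = C₀ ^ 2 * lam ^ 2 / τ ^ 2) (hρ1 : ρ < 1) :
    (∀ q ∈ Set.Icc (1 : ℝ) 2,
      (∑ j, |βh j - β₀ j| ^ q) ^ (1 / q) ≤
        C₀ * lam * ((l0 β₀ : ℝ)) ^ (1 / q) * (1 - ρ) ^ (-(1 / q))) ∧
    (∀ j, |βh j - β₀ j| ≤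
        C₀ * lam * ((l0 β₀ : ℝ)) ^ ((1 : ℝ) / 2) * (1 - ρ) ^ (-(1 : ℝ) / 2)) := by
  have hb' : Differentiable ℝ b := hb.differentiable two_ne_zero
  have hconv := strongConvexOn_univ_of_le_deriv_deriv hb' hb.differentiable_deriv_two
    fun θ ↦ (hvar θ).1
  have hpen := lipschitzOnWith_Ici_of_concaveOn_of_monotoneOn hconc hmono hpend0
  have hA : C₀ * lam = 2 * (lam / 2 + (c₃ * lam).toNNReal) / (c * c₂) := by
    rw [hC₀, Real.coe_toNNReal _ (by positivity)]
    ring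
  obtain ⟨hlq, hsup⟩ := estimation_losses_bound_general hn X b hb' c₂ hc₂ hconv β₀ ε y hy
    pen _ hpen c hc κ hse τ hτ hβ₀.1 βh hβh (hmin β₀ hβ₀) (lam / 2) (by positivity)
    hE (C₀ * lam) ρ hA (by rw [hρ, mul_pow]) hρ1
  exact ⟨fun q hq ↦ hlq q ⟨one_pos.trans_le hq.1, hq.2⟩, hsup⟩
end

section
/- Assume the bounded-variance condition, the concave-penalty condition, and the sparse-eigenvalue condition with constants c > 0 and κ. Let β₀ ∈ B_{τ,κ} with s = ‖β₀‖₀, let β̂ be a global minimizer of Q_n over B_{τ,κ}, and assume ‖n⁻¹Xᵀε‖_∞ ≤ λ/2. Set C₀ = (1 + 2c₃)/(c·c₂) and ρ = C₀²λ²/τ², and assume ρ < 1. Then the prediction loss satisfies n^{−1/2}·‖X(β̂ − β₀)‖₂ ≤ √c·C₀·λ·s^{1/2}·(1 − ρ)^{−1/2}. -/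
open scoped BigOperators Classical

/-!
Write `δ = β̂ - β₀` and `D = n⁻¹‖Xδ‖₂²`. Comparing `Q_n(β̂) ≤ Q_n(β₀)` and using strong convexity
of `b`, the noise bound and the Lipschitz bound on the penalty gives the basic inequality
`D ≤ c A ‖δ‖₁` with `A = C₀λ`. Cauchy–Schwarz on the support of `δ` and `c‖δ‖₂² ≤ D` turn it into
`D ≤ c A² ‖δ‖₀`, hence `‖δ‖₂² ≤ A² ‖δ‖₀`. Every false positive of `β̂` contributes at least `τ²` to
`‖δ‖₂²`, so `τ²‖δ‖₀ ≤ τ²s + A²‖δ‖₀`, that is, `(1 - ρ)‖δ‖₀ ≤ s`.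
-/

open Finset Matrix Topology
open scoped NNReal

section Convexity

theorem strongConvexOn_univ_of_le_deriv2 {f : ℝ → ℝ} {m : ℝ} (hf : Differentiable ℝ f)
    (hf' : Differentiable ℝ (deriv f)) (hm : ∀ x, m ≤ (deriv^[2] f) x) :
    StrongConvexOn Set.univ m f := by
  have hderiv (x : ℝ) : HasDerivAt (fun x ↦ f x - m / 2 * ‖x‖ ^ 2) (deriv f x - m * x) x := by
    simp only [Real.norm_eq_abs, sq_abs]
    exact ((hf x).hasDerivAt.sub ((hasDerivAt_pow 2 x).const_mul (m / 2))).congr_deriv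
      (by norm_num; ring)
  have hderiv_eq : deriv (fun x ↦ f x - m / 2 * ‖x‖ ^ 2) = fun x ↦ deriv f x - m * x :=
    funext fun x ↦ (hderiv x).deriv
  have hderiv2 (x : ℝ) : HasDerivAt (fun x ↦ deriv f x - m * x) (deriv (deriv f) x - m) x := by
    simpa using! (hf' x).hasDerivAt.sub ((hasDerivAt_id x).const_mul m)
  refine strongConvexOn_iff_convex.2 <| convexOn_univ_of_deriv2_nonneg
    (fun x ↦ (hderiv x).differentiableAt) ?_ fun x ↦ ?_
  · rw [hderiv_eq]
    exact fun x ↦ (hderiv2 x).differentiableAt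
  · change 0 ≤ deriv (deriv _) x
    rw [hderiv_eq, (hderiv2 x).deriv]
    exact sub_nonneg.2 (hm x)

theorem le_sub_sub_of_uniformConvexOn_of_hasLineDerivAt {E : Type*} [NormedAddCommGroup E]
    [NormedSpace ℝ E] {s : Set E} {φ : ℝ → ℝ} {f : E → ℝ} {f' : ℝ} {x y : E}
    (hf : UniformConvexOn s φ f) (hx : x ∈ s) (hy : y ∈ s)
    (hf' : HasLineDerivAt ℝ f f' x (y - x)) :
    φ ‖y - x‖ ≤ f y - f x - f' := by
  have hquot : ∀ᶠ t in 𝓝[>] (0 : ℝ),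
      t⁻¹ • (f (x + (0 + t) • (y - x)) - f (x + (0 : ℝ) • (y - x))) ≤
        f y - f x - (1 - t) * φ ‖y - x‖ := by
    filter_upwards [Ioo_mem_nhdsGT one_pos] with t ht
    have hconv := hf.2 hx hy (sub_nonneg.2 ht.2.le) ht.1.le (sub_add_cancel 1 t)
    have hcomb : (1 - t) • x + t • y = x + t • (y - x) := by module
    rw [hcomb, norm_sub_rev x y, smul_eq_mul, smul_eq_mul] at hconv
    rw [zero_add, zero_smul, add_zero, smul_eq_mul, inv_mul_le_iff₀ ht.1]
    linarith
  have hlim : Filter.Tendsto (fun t : ℝ ↦ f y - f x - (1 - t) * φ ‖y - x‖) (𝓝[>] 0)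
      (𝓝 (f y - f x - (1 - 0) * φ ‖y - x‖)) :=
    (Continuous.tendsto (by fun_prop) 0).mono_left nhdsWithin_le_nhds
  linarith [le_of_tendsto_of_tendsto (HasDerivAt.tendsto_slope_zero_right hf') hlim hquot]

theorem lipschitzOnWith_Ici_of_monotoneOn_of_concaveOn {f : ℝ → ℝ} {a d : ℝ}
    (hmono : MonotoneOn f (Set.Ici a)) (hconc : ConcaveOn ℝ (Set.Ici a) f)
    (hd : HasDerivWithinAt f d (Set.Ici a) a) :
    LipschitzOnWith d.toNNReal f (Set.Ici a) := by
  have hslope_left {x : ℝ} (hx : a < x) : slope f a x ≤ d :=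
    hconc.slope_le_of_hasDerivWithinAt Set.self_mem_Ici hx.le hx hd
  have hslope {x y : ℝ} (hx : a ≤ x) (hxy : x < y) : slope f x y ≤ d := by
    rcases hx.eq_or_lt with rfl | hax
    · exact hslope_left hxy
    · refine le_trans ?_ (hslope_left hax)
      simpa only [slope_def_field] using
        hconc.slope_anti_adjacent Set.self_mem_Ici (hx.trans hxy.le) hax hxy
  have hd_nonneg : 0 ≤ d :=
    hd.derivWithin (uniqueDiffOn_Ici a a Set.self_mem_Ici) ▸ hmono.derivWithin_nonneg
  refine LipschitzOnWith.of_le_add_mul' d fun y hy x hx ↦ ?_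
  rcases le_or_gt y x with hyx | hxy
  · exact (hmono hy hx hyx).trans (le_add_of_nonneg_right (by positivity))
  · have hle := hslope hx hxy
    rw [slope_def_field, div_le_iff₀ (sub_pos.2 hxy)] at hle
    rw [Real.dist_eq, abs_of_pos (sub_pos.2 hxy)]
    linarith

end Convexity

section FiniteVectors

variable {ι R : Type*} [Fintype ι]

theorem hammingNorm_sub_le {β : ι → Type*} [∀ i, DecidableEq (β i)] [∀ i, AddGroup (β i)]
    (u v : ∀ i, β i) : hammingNorm (u - v) ≤ hammingNorm u + hammingNorm v := by
  refine (card_le_card fun j ↦ ?_).trans (card_union_le _ _)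
  by_cases hu : u j = 0 <;> simp [hu]

variable [CommRing R] [LinearOrder R] [IsStrictOrderedRing R]

theorem dotProduct_le_mul_sum_abs {a : ι → R} {r : R} (ha : ∀ j, |a j| ≤ r) (v : ι → R) :
    a ⬝ᵥ v ≤ r * ∑ j, |v j| := by
  rw [dotProduct, mul_sum]
  refine sum_le_sum fun j _ ↦ (le_abs_self _).trans ?_
  rw [abs_mul]
  gcongr
  exact ha j

theorem mul_sum_mul_mulVec_le_mul_sum_abs {κ : Type*} [Fintype κ] {X : Matrix κ ι R} {ε : κ → R}
    {w r : R} (hε : ∀ j, |w * ∑ i, X i j * ε i| ≤ r) (v : ι → R) :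
    w * ∑ i, ε i * (X *ᵥ v) i ≤ r * ∑ j, |v j| := by
  have hdual : w * ∑ i, ε i * (X *ᵥ v) i = (w • (Xᵀ *ᵥ ε)) ⬝ᵥ v := by
    rw [smul_dotProduct, mulVec_transpose, ← dotProduct_mulVec, smul_eq_mul, dotProduct]
  rw [hdual]
  exact dotProduct_le_mul_sum_abs hε v

theorem sum_comp_abs_sub_le_mul_sum_abs_sub {f : ℝ → ℝ} {K : ℝ≥0}
    (hf : LipschitzOnWith K f (Set.Ici 0)) (u v : ι → ℝ) :
    ∑ j, (f |u j| - f |v j|) ≤ K * ∑ j, |u j - v j| := by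
  rw [mul_sum]
  refine sum_le_sum fun j _ ↦ ?_
  calc f |u j| - f |v j| ≤ dist (f |u j|) (f |v j|) := le_abs_self _
    _ ≤ K * dist |u j| |v j| := hf.dist_le_mul _ (abs_nonneg (u j)) _ (abs_nonneg (v j))
    _ ≤ K * |u j - v j| := by
      gcongr K * ?_
      exact abs_abs_sub_abs_le (u j) (v j)

variable [DecidableEq R]

theorem sq_sum_abs_le_hammingNorm_mul_sum_sq (v : ι → R) :
    (∑ j, |v j|) ^ 2 ≤ hammingNorm v * ∑ j, v j ^ 2 := by
  have hsupport : ∑ j with v j ≠ 0, |v j| = ∑ j, |v j| :=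
    sum_filter_of_ne fun j _ ↦ abs_ne_zero.1
  calc (∑ j, |v j|) ^ 2 = (∑ j with v j ≠ 0, |v j|) ^ 2 := by rw [hsupport]
    _ ≤ hammingNorm v * ∑ j with v j ≠ 0, |v j| ^ 2 := sq_sum_le_card_mul_sum_sq
    _ ≤ hammingNorm v * ∑ j, v j ^ 2 := by
      simp only [sq_abs]
      gcongr ?_ * ?_
      exact sum_le_univ_sum_of_nonneg fun j ↦ sq_nonneg (v j)

theorem sq_mul_hammingNorm_sub_le {τ : R} (hτ : 0 ≤ τ) {u : ι → R}
    (hu : ∀ j, u j = 0 ∨ τ ≤ |u j|) (v : ι → R) :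
    τ ^ 2 * hammingNorm (u - v) ≤ τ ^ 2 * hammingNorm v + ∑ j, (u - v) j ^ 2 := by
  let falsePos : Finset ι := {j | v j = 0 ∧ u j ≠ 0}
  have hcard : hammingNorm (u - v) ≤ hammingNorm v + #falsePos := by
    refine (card_le_card fun j ↦ ?_).trans (card_union_le _ _)
    by_cases hv : v j = 0 <;> simp [falsePos, hv]
  have hsum : τ ^ 2 * #falsePos ≤ ∑ j, (u - v) j ^ 2 := by
    calc τ ^ 2 * (#falsePos : R) = #falsePos • τ ^ 2 := by rw [nsmul_eq_mul, mul_comm]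
      _ ≤ ∑ j ∈ falsePos, (u - v) j ^ 2 := card_nsmul_le_sum _ _ _ fun j hj ↦ by
        obtain ⟨hv, hu0⟩ := (mem_filter.1 hj).2
        simpa [hv] using pow_le_pow_left₀ hτ ((hu j).resolve_left hu0) 2
      _ ≤ ∑ j, (u - v) j ^ 2 := sum_le_univ_sum_of_nonneg fun j ↦ sq_nonneg _
  calc τ ^ 2 * (hammingNorm (u - v) : R) ≤ τ ^ 2 * (hammingNorm v + #falsePos) := by
        gcongr
        exact_mod_cast hcard
    _ ≤ τ ^ 2 * hammingNorm v + ∑ j, (u - v) j ^ 2 := by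
        rw [mul_add]
        gcongr

theorem le_mul_sq_mul_hammingNorm_of_le_mul_sum_abs {v : ι → R} {c A D : R} (hc : 0 ≤ c)
    (hD : c * ∑ j, v j ^ 2 ≤ D) (hDv : D ≤ c * A * ∑ j, |v j|) :
    D ≤ c * A ^ 2 * hammingNorm v := by
  have hD_nonneg : 0 ≤ D := hD.trans' (by positivity)
  rcases hD_nonneg.eq_or_lt with rfl | hD_pos
  · positivity
  refine le_of_mul_le_mul_right ?_ hD_pos
  calc D * D ≤ (c * A * ∑ j, |v j|) ^ 2 := by
        rw [← sq]
        gcongr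
    _ = (c * A) ^ 2 * (∑ j, |v j|) ^ 2 := mul_pow _ _ _
    _ ≤ (c * A) ^ 2 * (hammingNorm v * ∑ j, v j ^ 2) := by
        gcongr
        exact sq_sum_abs_le_hammingNorm_mul_sum_sq v
    _ = c * A ^ 2 * hammingNorm v * (c * ∑ j, v j ^ 2) := by ring
    _ ≤ c * A ^ 2 * hammingNorm v * D := by gcongr

theorem le_mul_sq_mul_hammingNorm_div_one_sub {K : Type*} [Field K] [LinearOrder K]
    [IsStrictOrderedRing K] {u v : ι → K} {c A D τ : K} (hτ : 0 < τ)
    (hu : ∀ j, u j = 0 ∨ τ ≤ |u j|) (hc : 0 < c) (hD : c * ∑ j, (u - v) j ^ 2 ≤ D)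
    (hDv : D ≤ c * A * ∑ j, |(u - v) j|) (hA : A ^ 2 / τ ^ 2 < 1) :
    D ≤ c * A ^ 2 * (hammingNorm v / (1 - A ^ 2 / τ ^ 2)) := by
  have hD_le : D ≤ c * A ^ 2 * hammingNorm (u - v) :=
    le_mul_sq_mul_hammingNorm_of_le_mul_sum_abs hc.le hD hDv
  have hl2 : ∑ j, (u - v) j ^ 2 ≤ A ^ 2 * hammingNorm (u - v) :=
    le_of_mul_le_mul_left (by linarith) hc
  have hl0 : (hammingNorm (u - v) : K) ≤ hammingNorm v / (1 - A ^ 2 / τ ^ 2) := by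
    have hcount := sq_mul_hammingNorm_sub_le hτ.le hu v
    rw [le_div_iff₀ (sub_pos.2 hA), ← mul_le_mul_iff_right₀ (pow_pos hτ 2)]
    have hexpand : τ ^ 2 * (hammingNorm (u - v) * (1 - A ^ 2 / τ ^ 2)) =
        τ ^ 2 * hammingNorm (u - v) - A ^ 2 * hammingNorm (u - v) := by
      field_simp
    linarith
  exact hD_le.trans (by gcongr)

end FiniteVectors

section PenalizedLikelihood

variable {n p : ℕ}

theorem l0_eq_hammingNorm (v : Fin p → ℝ) : l0 v = hammingNorm v := by
  simp only [l0, hammingNorm]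

theorem Qn_sub_Qn (X : Matrix (Fin n) (Fin p) ℝ) (b pen : ℝ → ℝ) {y g ε : Fin n → ℝ}
    (hy : ∀ i, y i = g i + ε i) (β β₀ : Fin p → ℝ) :
    Qn X y b pen β - Qn X y b pen β₀ =
      (1 / n * ∑ i, (b ((X *ᵥ β) i) - b ((X *ᵥ β₀) i) - g i * (X *ᵥ (β - β₀)) i)) -
        1 / n * ∑ i, ε i * (X *ᵥ (β - β₀)) i - ∑ j, (pen |β₀ j| - pen |β j|) := by
  simp only [Qn, hy, mulVec_sub, Pi.sub_apply, sum_sub_distrib, mul_sub, add_mul, sum_add_distrib]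
  ring

theorem half_mul_mean_sq_le_mul_sum_abs_of_Qn_le {X : Matrix (Fin n) (Fin p) ℝ}
    {b pen : ℝ → ℝ} {β β₀ : Fin p → ℝ} {ε y : Fin n → ℝ} {m r : ℝ} {K : ℝ≥0}
    (hb : Differentiable ℝ b) (hconv : StrongConvexOn Set.univ m b)
    (hpen : LipschitzOnWith K pen (Set.Ici 0))
    (hy : ∀ i, y i = deriv b ((X *ᵥ β₀) i) + ε i)
    (hε : ∀ j, |1 / (n : ℝ) * ∑ i, X i j * ε i| ≤ r)
    (hle : Qn X y b pen β ≤ Qn X y b pen β₀) :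
    m / 2 * (1 / n * ∑ i, (X *ᵥ (β - β₀)) i ^ 2) ≤ (r + K) * ∑ j, |(β - β₀) j| := by
  have hcurv (s t : ℝ) : m / 2 * (t - s) ^ 2 ≤ b t - b s - deriv b s * (t - s) := by
    have hline := (hb s).hasDerivAt.hasFDerivAt.hasLineDerivAt (t - s)
    simpa [mul_comm] using le_sub_sub_of_uniformConvexOn_of_hasLineDerivAt hconv
      (Set.mem_univ s) (Set.mem_univ t) hline
  have hbregman : m / 2 * (1 / n * ∑ i, (X *ᵥ (β - β₀)) i ^ 2) ≤ 1 / n *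
      ∑ i, (b ((X *ᵥ β) i) - b ((X *ᵥ β₀) i) - deriv b ((X *ᵥ β₀) i) * (X *ᵥ (β - β₀)) i) := by
    rw [mul_left_comm, mul_sum]
    gcongr with i
    simpa only [mulVec_sub, Pi.sub_apply] using hcurv ((X *ᵥ β₀) i) ((X *ᵥ β) i)
  have hnoise := mul_sum_mul_mulVec_le_mul_sum_abs hε (β - β₀)
  have hpenalty : ∑ j, (pen |β₀ j| - pen |β j|) ≤ K * ∑ j, |(β - β₀) j| := by
    simpa only [Pi.sub_apply, abs_sub_comm] using sum_comp_abs_sub_le_mul_sum_abs_sub hpen β₀ β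
  linarith [Qn_sub_Qn X b pen hy β β₀]

theorem l0_sub_lt_of_mem_Bset {τ : ℝ} {κ : ℕ} {u v : Fin p → ℝ} (hu : u ∈ Bset τ κ)
    (hv : v ∈ Bset τ κ) : l0 (u - v) < κ := by
  have hsub := hammingNorm_sub_le u v
  simp only [← l0_eq_hammingNorm] at hsub
  linarith [hu.1, hv.1]

theorem prediction_loss_bound_general (hn : 0 < n) {X : Matrix (Fin n) (Fin p) ℝ}
    {b pen : ℝ → ℝ} {β β₀ : Fin p → ℝ} {ε y : Fin n → ℝ} {lam c c₂ c₃ τ C₀ ρ : ℝ}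
    (hy : ∀ i, y i = deriv b ((X *ᵥ β₀) i) + ε i)
    (hc₂ : 0 < c₂) (hb : Differentiable ℝ b) (hconv : StrongConvexOn Set.univ c₂ b)
    (hc₃ : 0 ≤ c₃) (hlam : 0 ≤ lam)
    (hpen : LipschitzOnWith (c₃ * lam).toNNReal pen (Set.Ici 0))
    (hc : 0 < c) (hse : c * ∑ j, (β - β₀) j ^ 2 ≤ 1 / n * ∑ i, (X *ᵥ (β - β₀)) i ^ 2)
    (hτ : 0 < τ) (hβ : ∀ j, β j = 0 ∨ τ ≤ |β j|)
    (hle : Qn X y b pen β ≤ Qn X y b pen β₀)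
    (hE : ∀ j, |1 / (n : ℝ) * ∑ i, X i j * ε i| ≤ lam / 2)
    (hC₀ : C₀ = (1 + 2 * c₃) / (c * c₂)) (hρ : ρ = C₀ ^ 2 * lam ^ 2 / τ ^ 2) (hρ1 : ρ < 1) :
    √(∑ i, (X *ᵥ (β - β₀)) i ^ 2) / √n ≤
      √c * C₀ * lam * √(l0 β₀) * (1 - ρ) ^ (-(1 : ℝ) / 2) := by
  have hn' : (0 : ℝ) < n := Nat.cast_pos.2 hn
  have hρ_pos : 0 < 1 - ρ := sub_pos.2 hρ1
  have hA : 0 ≤ C₀ * lam := by rw [hC₀]; positivity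
  have hl1 : 1 / n * ∑ i, (X *ᵥ (β - β₀)) i ^ 2 ≤ c * (C₀ * lam) * ∑ j, |(β - β₀) j| := by
    have hbasic := half_mul_mean_sq_le_mul_sum_abs_of_Qn_le hb hconv hpen hy hE hle
    rw [Real.coe_toNNReal _ (by positivity)] at hbasic
    have hconst : c * (C₀ * lam) = (lam / 2 + c₃ * lam) / (c₂ / 2) := by rw [hC₀]; field_simp
    rw [hconst, div_mul_eq_mul_div _ (c₂ / 2), le_div_iff₀ (by positivity)]
    linarith
  have hl0 : 1 / n * ∑ i, (X *ᵥ (β - β₀)) i ^ 2 ≤ c * (C₀ * lam) ^ 2 * (l0 β₀ / (1 - ρ)) := by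
    rw [l0_eq_hammingNorm, hρ, ← mul_pow]
    exact le_mul_sq_mul_hammingNorm_div_one_sub hτ hβ hc hse hl1
      (by rwa [mul_pow, ← hρ])
  rw [neg_div, Real.rpow_neg hρ_pos.le, ← Real.sqrt_eq_rpow]
  calc √(∑ i, (X *ᵥ (β - β₀)) i ^ 2) / √n = √(1 / n * ∑ i, (X *ᵥ (β - β₀)) i ^ 2) := by
        rw [← Real.sqrt_div' _ hn'.le, one_div_mul_eq_div]
    _ ≤ √(c * (C₀ * lam) ^ 2 * (l0 β₀ / (1 - ρ))) := Real.sqrt_le_sqrt hl0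
    _ = √c * C₀ * lam * √(l0 β₀) * (√(1 - ρ))⁻¹ := by
        rw [Real.sqrt_mul (by positivity), Real.sqrt_mul hc.le, Real.sqrt_sq hA,
          Real.sqrt_div' _ hρ_pos.le]
        ring

end PenalizedLikelihood

/-- Deterministic form of Theorem 1(c): with `C₀ = (1 + 2c₃)/(c·c₂)` and
`ρ = C₀²λ²/τ² < 1`, on the event `‖n⁻¹Xᵀε‖_∞ ≤ λ/2` the prediction loss of the global
minimizer satisfies `n^{−1/2}‖X(β̂ − β₀)‖₂ ≤ √c · C₀ λ s^{1/2} (1−ρ)^{−1/2}`. -/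
theorem prediction_loss_bound {n p : ℕ} (hn : 0 < n) (hp : 0 < p)
    (X : Matrix (Fin n) (Fin p) ℝ) (b : ℝ → ℝ) (hb : ContDiff ℝ 2 b)
    (β₀ : Fin p → ℝ) (ε : Fin n → ℝ) (y : Fin n → ℝ)
    (hy : ∀ i, y i = deriv b (X.mulVec β₀ i) + ε i)
    -- bounded-variance condition
    (c₂ : ℝ) (hc₂ : 0 < c₂) (hc₂1 : c₂ ≤ 1)
    (hvar : ∀ θ : ℝ, c₂ ≤ deriv (deriv b) θ ∧ deriv (deriv b) θ ≤ c₂⁻¹)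
    -- concave-penalty condition
    (pen : ℝ → ℝ) (lam c₃ : ℝ) (hc₃ : 0 < c₃) (hlam : 0 ≤ lam)
    (hmono : MonotoneOn pen (Set.Ici 0))
    (hconc : ConcaveOn ℝ (Set.Ici 0) pen)
    (hpen0 : pen 0 = 0)
    (hpendiff : DifferentiableOn ℝ pen (Set.Ioi 0))
    (hpend0 : HasDerivWithinAt pen (c₃ * lam) (Set.Ici 0) 0)
    -- sparse-eigenvalue (robust spark) condition
    (c : ℝ) (hc : 0 < c) (κ : ℕ)
    (hse : ∀ v : Fin p → ℝ, l0 v < κ →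
      c * ∑ j, (v j) ^ 2 ≤ (1 / (n : ℝ)) * ∑ i, (X.mulVec v i) ^ 2)
    -- thresholded parameter space and global minimizer
    (τ : ℝ) (hτ : 0 < τ) (hβ₀ : β₀ ∈ Bset τ κ)
    (βh : Fin p → ℝ) (hβh : βh ∈ Bset τ κ)
    (hmin : ∀ β ∈ Bset τ κ, Qn X y b pen βh ≤ Qn X y b pen β)
    -- the event `‖n⁻¹Xᵀε‖_∞ ≤ λ/2`
    (hE : ∀ j, |(1 / (n : ℝ)) * ∑ i, X i j * ε i| ≤ lam / 2)
    -- the explicit constants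
    (C₀ ρ : ℝ) (hC₀ : C₀ = (1 + 2 * c₃) / (c * c₂))
    (hρ : ρ = C₀ ^ 2 * lam ^ 2 / τ ^ 2) (hρ1 : ρ < 1) :
    Real.sqrt (∑ i, (X.mulVec (βh - β₀) i) ^ 2) / Real.sqrt n ≤
      Real.sqrt c * C₀ * lam * Real.sqrt (l0 β₀ : ℝ) * (1 - ρ) ^ (-(1 : ℝ) / 2) := by
  have hb' := hb.differentiable two_ne_zero
  have hconv := strongConvexOn_univ_of_le_deriv2 hb' hb.differentiable_deriv_two fun θ ↦ (hvar θ).1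
  have hpen := lipschitzOnWith_Ici_of_monotoneOn_of_concaveOn hmono hconc hpend0
  exact prediction_loss_bound_general hn hy hc₂ hb' hconv hc₃.le hlam hpen hc
    (hse _ (l0_sub_lt_of_mem_Bset hβh hβ₀)) hτ hβh.2 (hmin β₀ hβ₀) hE hC₀ hρ hρ1
end
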